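/- arXiv:2306.09157 — 2 statements merged into one kernel-verified Lean document; each statement's English description precedes it below -/
import Mathlib

section
/- Let G be a 100-almost-regular graph, let k ≥ 1 be an integer with δ(G) ≥ 2k, let S ⊆ V(G) with |S| ≤ k, and let v be a vertex of G. Then the probability that the nearest-neighbour random walk (X_t^v) started at v satisfies both X_i^v ≠ X_j^v for all 1 ≤ i < j ≤ k and X_i^v ∉ S for all i ∈ {1, ..., k} is at least 1 − 200·k^2/Δ(G). -/
/-!
The proof conditions on the first step of the walk. If `X₁ = w ∉ S`, the remaining walk starts at
`w` and must have distinct vertices that avoid `S ∪ {w}` (`walkEventProb_selfAvoids_succ`).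
A step from a vertex `v` lands in `S` with probability at most `|S| / d(v) ≤ |S| / δ(G)`, so by
induction on the number `t` of steps the bad event has probability at most `t (|S| + t) / δ(G)`
(`le_walkEventProb_selfAvoids`). With `t = k`, `|S| ≤ k` and `Δ(G) ≤ 100 δ(G)` this is at most
`2 k² / δ(G) ≤ 200 k² / Δ(G)`.
-/

open Finset
open scoped Classical

/-- The average degree of a graph. -/
noncomputable def avgDeg {V : Type} [Fintype V] (G : SimpleGraph V) : ℝ :=
  (∑ v : V, (G.degree v : ℝ)) / (Fintype.card V : ℝ)

/-- A graph is `K`-almost-regular if its maximum degree is at most `K` times its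
minimum degree. -/
noncomputable def AlmostRegular {V : Type} [Fintype V] (K : ℝ) (G : SimpleGraph V) : Prop :=
  (G.maxDegree : ℝ) ≤ K * (G.minDegree : ℝ)

/-- The number of edges of `G` with one endpoint in `X` and the other outside of `X`. -/
noncomputable def crossCount {V : Type} [Fintype V] (G : SimpleGraph V) (X : Finset V) : ℕ :=
  (G.edgeFinset.filter (fun e => ∃ a ∈ X, ∃ b ∈ Xᶜ, e = s(a, b))).card

/-- `G` is a `lam`-expander: every vertex set `X` with `|X| ≤ n/2` satisfies
`e(X, X̄) ≥ lam · d(G) · |X|`. -/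
noncomputable def IsExpander {V : Type} [Fintype V] (lam : ℝ) (G : SimpleGraph V) : Prop :=
  ∀ X : Finset V, (X.card : ℝ) ≤ (Fintype.card V : ℝ) / 2 →
    (crossCount G X : ℝ) ≥ lam * avgDeg G * (X.card : ℝ)

/-- The transition matrix `M = D·A` of the nearest-neighbour random walk on `G`:
`M v u = 1/d(v)` if `vu` is an edge and `0` otherwise. -/
noncomputable def transMat {V : Type} [Fintype V] (G : SimpleGraph V) : Matrix V V ℝ :=
  fun v u => if G.Adj v u then (1 : ℝ) / (G.degree v : ℝ) else 0

/-- `{P, Pᶜ}` is a bipartition of `G`: every edge crosses between `P` and its complement. -/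
def IsBipartition {V : Type} (G : SimpleGraph V) (P : Finset V) : Prop :=
  ∀ a b, G.Adj a b → (a ∈ P ↔ b ∉ P)

/-- A bipartite graph `G` with bipartition `{P, Pᶜ}` has mixing time `k` if for all vertices
`u, v`, `|(M^k)_{v,u} − (d(u)/(2m))·(1 + (−1)^{k + 1_{v∈P} + 1_{u∈P}})| ≤ 1/n²`. -/
noncomputable def HasMixingTime {V : Type} [Fintype V] (G : SimpleGraph V) (P : Finset V)
    (k : ℕ) : Prop :=
  ∀ v u : V,
    |((transMat G ^ k) v u) - ((G.degree u : ℝ) / (2 * (G.edgeFinset.card : ℝ))) *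
      (1 + (-1 : ℝ) ^ (k + (if v ∈ P then 1 else 0) + (if u ∈ P then 1 else 0)))| ≤
      1 / (Fintype.card V : ℝ) ^ 2

/-- The probability of a given trajectory `f` of `t` steps of the nearest-neighbour random
walk: the product of `1/d(v_i)` over `0 ≤ i ≤ t−1`. -/
noncomputable def walkProb {V : Type} [Fintype V] (G : SimpleGraph V) (t : ℕ)
    (f : Fin (t + 1) → V) : ℝ :=
  ∏ i : Fin t, (1 : ℝ) / (G.degree (f i.castSucc) : ℝ)

/-- `f : Fin (t+1) → V` is a walk in `G`: consecutive vertices are adjacent. -/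
def IsWalkFun {V : Type} (G : SimpleGraph V) (t : ℕ) (f : Fin (t + 1) → V) : Prop :=
  ∀ i : Fin t, G.Adj (f i.castSucc) (f i.succ)

/-- The probability that the nearest-neighbour random walk of length `t` started at `v`
satisfies the event `E`. -/
noncomputable def walkEventProb {V : Type} [Fintype V] (G : SimpleGraph V) (v : V) (t : ℕ)
    (E : (Fin (t + 1) → V) → Prop) : ℝ :=
  ∑ f : Fin (t + 1) → V, if f 0 = v ∧ IsWalkFun G t f ∧ E f then walkProb G t f else 0


/-- The event that the vertices `f 1, …, f t` are pairwise distinct and avoid `S`; the starting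
vertex `f 0` is unconstrained. -/
def SelfAvoids {V : Type} (S : Finset V) (t : ℕ) (f : Fin (t + 1) → V) : Prop :=
  (∀ i j : Fin t, i ≠ j → f i.succ ≠ f j.succ) ∧ ∀ i : Fin t, f i.succ ∉ S

/-- Prepending a vertex `a` turns `g 0` into the first constrained vertex: it must avoid `S`, and
the later ones must avoid it as well. -/
lemma selfAvoids_cons {V : Type} (S : Finset V) (t : ℕ) (a : V) (g : Fin (t + 1) → V) :
    SelfAvoids S (t + 1) (Fin.cons a g : Fin (t + 2) → V) ↔
      g 0 ∉ S ∧ SelfAvoids (insert (g 0) S) t g := by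
  simp only [SelfAvoids, Fin.cons_succ, Finset.mem_insert, not_or]
  constructor
  · rintro ⟨h1, h2⟩
    exact ⟨h2 0, fun i j hij => h1 _ _ (fun h => hij (Fin.succ_injective _ h)),
      fun i => ⟨h1 _ _ (Fin.succ_ne_zero i), h2 _⟩⟩
  · rintro ⟨h0, h1, h2⟩
    refine ⟨fun i j => ?_, fun i => ?_⟩
    · refine Fin.cases ?_ (fun i => ?_) i <;> refine Fin.cases ?_ (fun j => ?_) j
      · exact fun h => absurd rfl h
      · exact fun _ => Ne.symm (h2 j).1
      · exact fun _ => (h2 i).1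
      · exact fun h => h1 i j (fun h' => h (congrArg _ h'))
    · refine Fin.cases h0 (fun i => (h2 i).2) i

lemma isWalkFun_cons {V : Type} (G : SimpleGraph V) (t : ℕ) (a : V) (g : Fin (t + 1) → V) :
    IsWalkFun G (t + 1) (Fin.cons a g : Fin (t + 2) → V) ↔ G.Adj a (g 0) ∧ IsWalkFun G t g := by
  simp [IsWalkFun, Fin.forall_fin_succ (n := t)]

lemma walkProb_cons {V : Type} [Fintype V] (G : SimpleGraph V) (t : ℕ) (a : V)
    (g : Fin (t + 1) → V) :
    walkProb G (t + 1) (Fin.cons a g : Fin (t + 2) → V) =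
      1 / (G.degree a : ℝ) * walkProb G t g := by
  unfold walkProb
  rw [Fin.prod_univ_succ]
  rfl

lemma sum_fin_cons {V : Type} [Fintype V] (t : ℕ) (F : (Fin (t + 2) → V) → ℝ) :
    ∑ f, F f = ∑ a : V, ∑ g : Fin (t + 1) → V, F (Fin.cons a g : Fin (t + 2) → V) := by
  rw [← (Fin.consEquiv (fun _ : Fin (t + 2) => V)).sum_comp, Fintype.sum_prod_type]
  rfl

/-- The Markov property at time one for the self-avoiding event. -/
lemma walkEventProb_selfAvoids_succ {V : Type} [Fintype V] (G : SimpleGraph V) (t : ℕ)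
    (S : Finset V) (v : V) :
    walkEventProb G v (t + 1) (SelfAvoids S (t + 1)) =
      ∑ w ∈ G.neighborFinset v \ S,
        1 / (G.degree v : ℝ) * walkEventProb G w t (SelfAvoids (insert w S) t) := by
  unfold walkEventProb
  rw [sum_fin_cons, Finset.sum_eq_single v]
  · simp_rw [Finset.mul_sum]
    rw [Finset.sum_comm]
    refine Finset.sum_congr rfl fun g _ => ?_
    simp only [isWalkFun_cons, selfAvoids_cons, walkProb_cons, Fin.cons_zero,
      true_and]
    -- only `w = g 0` contributes to the sum over first steps
    by_cases hg : g 0 ∈ G.neighborFinset v \ S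
    · rw [Finset.sum_eq_single_of_mem _ hg]
      · simp only [Finset.mem_sdiff, SimpleGraph.mem_neighborFinset] at hg
        simp [hg.1, hg.2]
      · intro w _ hw
        rw [if_neg (fun h => hw h.1.symm), mul_zero]
    · rw [Finset.sum_eq_zero]
      · rw [if_neg]
        rintro ⟨⟨h1, -⟩, h2, -⟩
        exact hg (by simp [h1, h2])
      · intro w hw
        rw [if_neg, mul_zero]
        rintro ⟨rfl, -⟩
        exact hg hw
  · intro a _ ha
    refine Finset.sum_eq_zero fun g _ => if_neg ?_
    rintro ⟨h, -⟩
    exact ha (by simpa using h)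
  · simp

/-- A union bound: at each of the `t` steps at most `|S| + t` vertices are forbidden, and each is
hit with probability at most `1 / δ(G)`. -/
lemma le_walkEventProb_selfAvoids {V : Type} [Fintype V] (G : SimpleGraph V)
    (hδ : 0 < G.minDegree) (t : ℕ) (S : Finset V) (v : V) :
    1 - (t : ℝ) * (S.card + t) / (G.minDegree : ℝ) ≤
      walkEventProb G v t (SelfAvoids S t) := by
  induction t generalizing S v with
  | zero =>
    have : walkEventProb G v 0 (SelfAvoids S 0) = 1 := by
      unfold walkEventProb
      rw [← (Equiv.funUnique (Fin 1) V).symm.sum_comp]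
      simp [SelfAvoids, IsWalkFun, walkProb]
    rw [this]
    simp
  | succ t ih =>
    have hδ' : (0 : ℝ) < G.minDegree := by exact_mod_cast hδ
    have hle : (G.minDegree : ℝ) ≤ G.degree v := by exact_mod_cast G.minDegree_le_degree v
    have hd : (0 : ℝ) < G.degree v := hδ'.trans_le hle
    rw [walkEventProb_selfAvoids_succ]
    set N := G.neighborFinset v \ S
    set c : ℝ := (t : ℝ) * (S.card + 1 + t) / (G.minDegree : ℝ) with hc
    have hc0 : 0 ≤ c := by positivity
    have hstep : ∀ w ∈ N, 1 / (G.degree v : ℝ) * (1 - c) ≤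
        1 / (G.degree v : ℝ) * walkEventProb G w t (SelfAvoids (insert w S) t) := by
      intro w hw
      refine mul_le_mul_of_nonneg_left ?_ (by positivity)
      have := ih (insert w S) w
      rw [Finset.card_insert_of_notMem (Finset.mem_sdiff.1 hw).2] at this
      push_cast at this
      exact this
    refine le_trans ?_ (Finset.sum_le_sum hstep)
    rw [Finset.sum_const, nsmul_eq_mul]
    have hN1 : (N.card : ℝ) ≤ G.degree v := by
      rw [← G.card_neighborFinset_eq_degree v]
      exact_mod_cast Finset.card_le_card Finset.sdiff_subset
    have hN2 : (G.degree v : ℝ) - S.card ≤ N.card := by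
      have : G.degree v ≤ N.card + S.card := by
        rw [← G.card_neighborFinset_eq_degree v]
        have : (G.neighborFinset v).card - S.card ≤ N.card := Finset.le_card_sdiff _ _
        omega
      have : (G.degree v : ℝ) ≤ N.card + S.card := by exact_mod_cast this
      linarith
    -- the first step avoids `S` with probability `p`
    set p : ℝ := N.card / G.degree v with hp
    have hp1 : p ≤ 1 := (div_le_one hd).2 hN1
    have hp2 : 1 - (S.card : ℝ) / G.minDegree ≤ p := by
      have h1 : (S.card : ℝ) / G.degree v ≤ S.card / G.minDegree := by gcongr
      have h2 : ((G.degree v : ℝ) - S.card) / G.degree v ≤ p := by rw [hp]; gcongr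
      rw [sub_div, div_self hd.ne'] at h2
      linarith
    have hsum : (S.card : ℝ) / G.minDegree + c ≤
        ((t + 1 : ℕ) : ℝ) * (S.card + (t + 1 : ℕ)) / G.minDegree := by
      rw [hc, ← add_div]
      gcongr
      push_cast
      nlinarith [(Nat.cast_nonneg t : (0 : ℝ) ≤ t)]
    have hrw : (N.card : ℝ) * (1 / (G.degree v : ℝ) * (1 - c)) = p * (1 - c) := by
      rw [hp]; ring
    rw [hrw]
    nlinarith [mul_le_mul_of_nonneg_right hp1 hc0]

/-- Let `G` be a `100`-almost-regular graph, `k ≥ 1` with `δ(G) ≥ 2k`, let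
`S` be a vertex set with `|S| ≤ k` and let `v` be a vertex. Then the probability that the
random walk started at `v` has pairwise distinct vertices `X₁, …, X_k` all avoiding `S` is
at least `1 − 200·k²/Δ(G)`. -/
theorem stmt_16 {V : Type} [Fintype V] (G : SimpleGraph V)
    (hreg : AlmostRegular 100 G) (k : ℕ) (hk : 1 ≤ k)
    (hdelta : 2 * k ≤ G.minDegree) (S : Finset V) (hS : S.card ≤ k) (v : V) :
    1 - 200 * (k : ℝ) ^ 2 / (G.maxDegree : ℝ) ≤
      walkEventProb G v k (fun f =>
        (∀ i j : Fin k, i ≠ j → f i.succ ≠ f j.succ) ∧ ∀ i : Fin k, f i.succ ∉ S) := by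
  have hδ : 0 < G.minDegree := by omega
  have hδ' : (0 : ℝ) < G.minDegree := by exact_mod_cast hδ
  have hΔ' : (0 : ℝ) < G.maxDegree := by
    have h := (G.minDegree_le_degree v).trans (G.degree_le_maxDegree v)
    exact_mod_cast hδ.trans_le h
  have hS' : (S.card : ℝ) ≤ k := by exact_mod_cast hS
  unfold AlmostRegular at hreg
  refine le_trans ?_ (le_walkEventProb_selfAvoids G hδ k S v)
  refine sub_le_sub_left ?_ 1
  calc (k : ℝ) * (S.card + k) / G.minDegree ≤ k * (k + k) / G.minDegree := by gcongr
    _ ≤ 200 * (k : ℝ) ^ 2 / G.maxDegree := by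
      rw [div_le_div_iff₀ hδ' hΔ']
      nlinarith [mul_le_mul_of_nonneg_left hreg (sq_nonneg (k : ℝ))]
end

section
/- Let β = 10^{−28}, and let G be a connected 100-almost-regular bipartite graph on n vertices with mixing time k and δ(G) ≥ 10^3·k^2/β, where n is sufficiently large. For A ⊆ V(G) and a vertex v, let E_A^v be the event that the nearest-neighbour random walk (X_t^v) started at v satisfies X_t^v ∉ A for all t ∈ {1, ..., k}, and define α_v(A) = min over sets S ⊆ V(G) with |S| = k of P(E_{A∪S}^v). Let A ⊆ V(G) with |A| ≤ β^2·n/(10^6·k), and let X be the set of vertices v with α_v(A) ≥ 1 − β − 200·k^2/Δ(G). Then |X| ≥ n − 100·k·|A|/β, and for every vertex v, the probability Q_k^v(X) that the random walk started at v is at a vertex of X after k steps satisfies Q_k^v(X) ≥ 1 − 10^5·k·|A|/(β·n) ≥ 1 − β/10. -/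
/-!
The bound rests on writing the law of the walk after `i` steps as the matrix power `M ^ i`
(`walkExp_coord`), for which three facts suffice: rows sum to `1`, entries of `M ^ (i + 1)` are at
most `1 / δ(G)`, and the degree vector is stationary, `∑ v, d(v) (M ^ i) v u = d(u)`.

* A set `S` of `k` vertices is hit during `k` steps with probability at most
  `k² / δ(G) ≤ 100 k² / Δ(G)`, by a union bound over times and vertices. Hence a vertex is good as
  soon as the expected number `hitSum` of visits to `A` is at most `β` (`mem_goodSet`).
* By stationarity `∑ v, d(v) hitSum v = k ∑ a ∈ A, d(a)`, and almost-regularity turns this into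
  `∑ v, hitSum v ≤ 100 k |A|` (`sum_hitSum_le`). Markov's inequality then bounds the number of bad
  vertices by `100 k |A| / β`.
* The mixing hypothesis gives `(M ^ k) v u ≤ d(u) / m + 1 / n² ≤ 201 / n`, so the walk ends in a
  bad vertex with probability at most `201 / n` times the number of bad vertices.
-/

open Finset
open scoped Classical

/-- The set `X` of vertices `v` with `α_v(A) ≥ 1 − β − 200k²/Δ(G)`, where
`α_v(A) = min_{S, |S|=k} P(E_{A∪S}^v)` and `E_{A∪S}^v` is the event that the random walk
started at `v` avoids `A ∪ S` during its first `k` steps. (The condition `min_S ≥ c` is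
stated as `∀ S, P(E_{A∪S}^v) ≥ c`.) -/
noncomputable def goodSet {V : Type} [Fintype V] (G : SimpleGraph V) (β : ℝ) (k : ℕ)
    (A : Finset V) : Finset V :=
  Finset.univ.filter (fun v : V => ∀ S : Finset V, S.card = k →
    1 - β - 200 * (k : ℝ) ^ 2 / (G.maxDegree : ℝ) ≤
      walkEventProb G v k (fun f => ∀ i : Fin k, f i.succ ∉ A ∪ S))

/-! ### Expectations over trajectories -/

/-- The expectation of the functional `F` of the first `t` steps of the walk started at `v`. The
weight of a trajectory is a product of transition-matrix entries, so it vanishes unless the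
trajectory is a walk in `G`. -/
noncomputable def walkExp {V : Type} [Fintype V] (G : SimpleGraph V) (v : V) (t : ℕ)
    (F : (Fin (t + 1) → V) → ℝ) : ℝ :=
  ∑ f : Fin (t + 1) → V,
    if f 0 = v then (∏ i : Fin t, transMat G (f i.castSucc) (f i.succ)) * F f else 0

/-- The expected number of visits to `A` at times `1, ..., k` of the walk started at `v`. -/
noncomputable def hitSum {V : Type} [Fintype V] (G : SimpleGraph V) (k : ℕ) (A : Finset V)
    (v : V) : ℝ :=
  ∑ i : Fin k, ∑ a ∈ A, (transMat G ^ (i.val + 1)) v a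

section Walk

variable {V : Type} [Fintype V] (G : SimpleGraph V)

lemma walkEventProb_eq_walkExp (v : V) (t : ℕ) (E : (Fin (t + 1) → V) → Prop) :
    walkEventProb G v t E = walkExp G v t (fun f => if E f then 1 else 0) := by
  unfold walkEventProb walkExp
  refine Finset.sum_congr rfl fun f _ => ?_
  by_cases h0 : f 0 = v
  · by_cases hE : E f
    · by_cases hw : IsWalkFun G t f
      · simp only [h0, hw, hE, and_self, if_true, mul_one, walkProb]
        exact Finset.prod_congr rfl fun i _ => by simp [transMat, hw i]
      · have hw' := hw
        unfold IsWalkFun at hw'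
        push Not at hw'
        obtain ⟨i, hi⟩ := hw'
        have : ∏ i : Fin t, transMat G (f i.castSucc) (f i.succ) = 0 :=
          Finset.prod_eq_zero (Finset.mem_univ i) (by simp [transMat, hi])
        simp [hw, this]
    · simp [hE]
  · simp [h0]

/-! ### Powers of the transition matrix -/

lemma transMat_nonneg (v u : V) : 0 ≤ transMat G v u := by
  unfold transMat; split_ifs <;> positivity

lemma transMat_pow_nonneg (i : ℕ) (v u : V) : 0 ≤ (transMat G ^ i) v u := by
  induction i generalizing u with
  | zero => rw [pow_zero, Matrix.one_apply]; split_ifs <;> norm_num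
  | succ i ih =>
    rw [pow_succ, Matrix.mul_apply]
    exact Finset.sum_nonneg fun w _ => mul_nonneg (ih w) (transMat_nonneg G w u)

lemma transMat_row_sum {v : V} (hv : 0 < G.degree v) : ∑ u, transMat G v u = 1 := by
  unfold transMat
  rw [← Finset.sum_filter, Finset.sum_const, ← SimpleGraph.neighborFinset_eq_filter,
    SimpleGraph.card_neighborFinset_eq_degree, nsmul_eq_mul]
  field_simp

lemma transMat_pow_row_sum (hd : ∀ v, 0 < G.degree v) (i : ℕ) (v : V) :
    ∑ u, (transMat G ^ i) v u = 1 := by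
  induction i with
  | zero => simp [Matrix.one_apply]
  | succ i ih =>
    simp only [pow_succ, Matrix.mul_apply]
    rw [Finset.sum_comm]
    simp only [← Finset.mul_sum, transMat_row_sum G (hd _), mul_one, ih]

/-- The degree vector is stationary for the walk. -/
lemma degree_mul_transMat_pow_sum (hd : ∀ v, 0 < G.degree v) (i : ℕ) (u : V) :
    ∑ v, (G.degree v : ℝ) * (transMat G ^ i) v u = G.degree u := by
  induction i generalizing u with
  | zero => simp [Matrix.one_apply]
  | succ i ih =>
    simp only [pow_succ, Matrix.mul_apply, Finset.mul_sum]
    rw [Finset.sum_comm]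
    simp only [← mul_assoc, ← Finset.sum_mul, ih]
    have : ∀ w, (G.degree w : ℝ) * transMat G w u = if G.Adj u w then 1 else 0 := by
      intro w
      have := hd w
      simp only [transMat, G.adj_comm u w]
      split_ifs
      · field_simp
      · simp
    simp only [this]
    rw [← Finset.sum_filter, Finset.sum_const, ← SimpleGraph.neighborFinset_eq_filter,
      SimpleGraph.card_neighborFinset_eq_degree]
    simp

/-- The last step of the walk picks any given vertex with probability at most `1 / δ(G)`. -/
lemma transMat_pow_succ_le (hd : ∀ v, 0 < G.degree v) (hδ : 0 < G.minDegree) (i : ℕ) (v u : V) :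
    (transMat G ^ (i + 1)) v u ≤ 1 / (G.minDegree : ℝ) := by
  have hδ' : (0 : ℝ) < G.minDegree := by exact_mod_cast hδ
  have hle : ∀ w, transMat G w u ≤ 1 / (G.minDegree : ℝ) := by
    intro w
    unfold transMat
    split_ifs
    · exact one_div_le_one_div_of_le hδ' (by exact_mod_cast G.minDegree_le_degree w)
    · positivity
  rw [pow_succ, Matrix.mul_apply]
  calc ∑ w, (transMat G ^ i) v w * transMat G w u
      ≤ ∑ w, (transMat G ^ i) v w * (1 / (G.minDegree : ℝ)) :=
        Finset.sum_le_sum fun w _ =>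
          mul_le_mul_of_nonneg_left (hle w) (transMat_pow_nonneg G i v w)
    _ = _ := by rw [← Finset.sum_mul, transMat_pow_row_sum G hd, one_mul]

/-! ### The law of the walk -/

/-- The Markov property at time `1`. -/
lemma walkExp_succ (v : V) (t : ℕ) (F : (Fin (t + 2) → V) → ℝ) :
    walkExp G v (t + 1) F =
      ∑ w, transMat G v w * walkExp G w t (fun g => F (Fin.cons v g)) := by
  unfold walkExp
  rw [← (Fin.consEquiv (fun _ : Fin (t + 2) => V)).sum_comp, Fintype.sum_prod_type]
  simp only [Fin.consEquiv_apply, Fin.cons_zero, Fin.prod_univ_succ, Fin.castSucc_zero,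
    ← Fin.succ_castSucc, Fin.cons_succ, Finset.mul_sum]
  rw [Finset.sum_eq_single v (fun b _ hb => by simp [hb]) (by simp), Finset.sum_comm]
  refine Finset.sum_congr rfl fun g _ => ?_
  rw [Finset.sum_eq_single (g 0) (fun b _ hb => by simp [Ne.symm hb]) (by simp)]
  simp [mul_assoc, Fin.consEquiv]

lemma walkExp_one (hd : ∀ v, 0 < G.degree v) (v : V) (t : ℕ) :
    walkExp G v t (fun _ => 1) = 1 := by
  induction t generalizing v with
  | zero =>
    unfold walkExp
    rw [Finset.sum_eq_single (fun _ => v)]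
    · simp
    · intro f _ hf
      rw [if_neg]
      intro h
      exact hf (funext fun i => by rw [Fin.fin_one_eq_zero i, h])
    · simp
  | succ t ih => rw [walkExp_succ]; simp only [ih, mul_one, transMat_row_sum G (hd v)]

lemma walkExp_add (v : V) (t : ℕ) (F H : (Fin (t + 1) → V) → ℝ) :
    walkExp G v t (fun f => F f + H f) = walkExp G v t F + walkExp G v t H := by
  unfold walkExp
  rw [← Finset.sum_add_distrib]
  refine Finset.sum_congr rfl fun f _ => ?_
  split_ifs <;> ring

lemma walkExp_zero (v : V) (t : ℕ) : walkExp G v t (fun _ => 0) = 0 := by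
  simp [walkExp]

lemma walkExp_sum {ι : Type*} (s : Finset ι) (v : V) (t : ℕ)
    (F : ι → (Fin (t + 1) → V) → ℝ) :
    walkExp G v t (fun f => ∑ j ∈ s, F j f) = ∑ j ∈ s, walkExp G v t (F j) := by
  induction s using Finset.induction_on with
  | empty => simp [walkExp_zero]
  | insert a s ha ih => simp only [Finset.sum_insert ha, walkExp_add, ih]

lemma walkExp_mono (v : V) (t : ℕ) {F H : (Fin (t + 1) → V) → ℝ} (h : ∀ f, F f ≤ H f) :
    walkExp G v t F ≤ walkExp G v t H := by
  refine Finset.sum_le_sum fun f _ => ?_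
  split_ifs
  · exact mul_le_mul_of_nonneg_left (h f) (Finset.prod_nonneg fun i _ => transMat_nonneg G _ _)
  · exact le_rfl

/-- The position after `i` steps is distributed according to the row `v` of `M ^ i`. -/
lemma walkExp_coord (hd : ∀ v, 0 < G.degree v) (t : ℕ) (i : Fin (t + 1)) (v u : V) :
    walkExp G v t (fun f => if f i = u then 1 else 0) = (transMat G ^ i.val) v u := by
  have h0 : ∀ t v, walkExp G v t (fun f => if f 0 = u then 1 else 0) =
      (transMat G ^ 0) v u := by
    intro t v
    have : walkExp G v t (fun f => if f 0 = u then 1 else 0) =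
        walkExp G v t (fun _ => if v = u then 1 else 0) := by
      unfold walkExp
      refine Finset.sum_congr rfl fun f _ => ?_
      by_cases h : f 0 = v <;> simp [h]
    rw [this, pow_zero, Matrix.one_apply]
    split_ifs
    · exact walkExp_one G hd v t
    · exact walkExp_zero G v t
  induction t generalizing v with
  | zero => rw [Fin.fin_one_eq_zero i]; exact h0 0 v
  | succ t ih =>
    refine Fin.cases ?_ (fun j => ?_) i
    · exact h0 _ v
    · rw [walkExp_succ]
      simp only [Fin.cons_succ, ih, Fin.val_succ]
      rw [pow_succ', Matrix.mul_apply]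

lemma walkExp_mem (hd : ∀ v, 0 < G.degree v) (t : ℕ) (i : Fin (t + 1)) (v : V) (B : Finset V) :
    walkExp G v t (fun f => if f i ∈ B then 1 else 0) = ∑ u ∈ B, (transMat G ^ i.val) v u := by
  simp only [← walkExp_coord G hd t i v]
  rw [← walkExp_sum]
  congr 1
  funext f
  simp

/-! ### Good vertices -/

/-- Union bound over the times `1, ..., k`. -/
lemma avoid_ge (hd : ∀ v, 0 < G.degree v) (k : ℕ) (v : V) (A S : Finset V) :
    1 - hitSum G k A v - hitSum G k S v ≤
      walkEventProb G v k (fun f => ∀ i : Fin k, f i.succ ∉ A ∪ S) := by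
  have hsum : ∀ B : Finset V, hitSum G k B v =
      walkExp G v k (fun f => ∑ i : Fin k, if f i.succ ∈ B then 1 else 0) := by
    intro B
    rw [walkExp_sum]
    exact Finset.sum_congr rfl fun i _ => by rw [walkExp_mem G hd, Fin.val_succ]
  rw [walkEventProb_eq_walkExp, sub_sub, sub_le_iff_le_add, hsum, hsum, ← walkExp_add,
    ← walkExp_add]
  refine (walkExp_one G hd v k).symm.le.trans ?_
  refine walkExp_mono G v k fun f => ?_
  have hnn : ∀ B : Finset V, (0 : ℝ) ≤ ∑ i : Fin k, if f i.succ ∈ B then 1 else 0 :=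
    fun B => Finset.sum_nonneg fun i _ => by split_ifs <;> norm_num
  have hge : ∀ (B : Finset V) (i : Fin k), f i.succ ∈ B →
      (1 : ℝ) ≤ ∑ i : Fin k, if f i.succ ∈ B then 1 else 0 := by
    intro B i hi
    have := Finset.single_le_sum (f := fun i : Fin k => if f i.succ ∈ B then (1 : ℝ) else 0)
      (fun i _ => by split_ifs <;> norm_num) (Finset.mem_univ i)
    simpa [hi] using this
  have hA := hnn A
  have hS := hnn S
  split_ifs with h
  · linarith
  · push Not at h
    obtain ⟨i, hi⟩ := h
    rcases Finset.mem_union.1 hi with hi | hi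
    · linarith [hge A i hi]
    · linarith [hge S i hi]

lemma hitSum_nonneg (k : ℕ) (A : Finset V) (v : V) : 0 ≤ hitSum G k A v :=
  Finset.sum_nonneg fun _ _ => Finset.sum_nonneg fun a _ => transMat_pow_nonneg G _ v a

lemma hitSum_le (hd : ∀ v, 0 < G.degree v) (hδ : 0 < G.minDegree) (k : ℕ) (S : Finset V) (v : V) :
    hitSum G k S v ≤ (k : ℝ) * S.card / G.minDegree := by
  calc hitSum G k S v ≤ ∑ _i : Fin k, ∑ _a ∈ S, 1 / (G.minDegree : ℝ) :=
        Finset.sum_le_sum fun i _ => Finset.sum_le_sum fun a _ =>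
          transMat_pow_succ_le G hd hδ i v a
    _ = _ := by simp; ring

/-- A vertex whose walk visits `A` at most `β` times in expectation is good. -/
lemma mem_goodSet (hd : ∀ v, 0 < G.degree v) (hδ : 0 < G.minDegree) (hΔ : 0 < G.maxDegree)
    (hreg : AlmostRegular 100 G) (β : ℝ) (k : ℕ) (A : Finset V) (v : V)
    (hv : hitSum G k A v ≤ β) : v ∈ goodSet G β k A := by
  refine Finset.mem_filter.2 ⟨Finset.mem_univ v, fun S hS => ?_⟩
  refine le_trans ?_ (avoid_ge G hd k v A S)
  have h := hitSum_le G hd hδ k S v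
  have hδ' : (0 : ℝ) < G.minDegree := by exact_mod_cast hδ
  have hΔ' : (0 : ℝ) < G.maxDegree := by exact_mod_cast hΔ
  have h2 : (k : ℝ) * S.card / G.minDegree ≤ 200 * (k : ℝ) ^ 2 / G.maxDegree := by
    unfold AlmostRegular at hreg
    rw [hS, div_le_div_iff₀ hδ' hΔ']
    nlinarith [mul_le_mul_of_nonneg_left hreg (sq_nonneg (k : ℝ)),
      mul_nonneg (sq_nonneg (k : ℝ)) hδ'.le]
  linarith

/-- Stationarity of the degree vector, combined with almost-regularity. -/
lemma sum_hitSum_le (hd : ∀ v, 0 < G.degree v) (hδ : 0 < G.minDegree)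
    (hreg : AlmostRegular 100 G) (k : ℕ) (A : Finset V) :
    ∑ v, hitSum G k A v ≤ 100 * k * A.card := by
  have hδ' : (0 : ℝ) < G.minDegree := by exact_mod_cast hδ
  have h1 : (G.minDegree : ℝ) * ∑ v, hitSum G k A v ≤ ∑ v, (G.degree v : ℝ) * hitSum G k A v := by
    rw [Finset.mul_sum]
    exact Finset.sum_le_sum fun v _ => mul_le_mul_of_nonneg_right
      (by exact_mod_cast G.minDegree_le_degree v) (hitSum_nonneg G k A v)
  have h2 : ∑ v, (G.degree v : ℝ) * hitSum G k A v = k * ∑ a ∈ A, (G.degree a : ℝ) := by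
    simp only [hitSum, Finset.mul_sum]
    rw [Finset.sum_comm]
    have : ∀ i : Fin k, ∑ v, ∑ a ∈ A, (G.degree v : ℝ) * (transMat G ^ (i.val + 1)) v a =
        ∑ a ∈ A, (G.degree a : ℝ) := by
      intro i
      rw [Finset.sum_comm]
      exact Finset.sum_congr rfl fun a _ => degree_mul_transMat_pow_sum G hd _ a
    rw [Finset.sum_congr rfl fun i _ => this i]
    simp [Finset.mul_sum]
  have h3 : ∑ a ∈ A, (G.degree a : ℝ) ≤ A.card * (100 * G.minDegree) := by
    rw [← nsmul_eq_mul]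
    exact Finset.sum_le_card_nsmul _ _ _ fun a _ =>
      le_trans (by exact_mod_cast G.degree_le_maxDegree a) hreg
  have h4 := mul_le_mul_of_nonneg_left h3 (Nat.cast_nonneg (α := ℝ) k)
  refine le_of_mul_le_mul_left ?_ hδ'
  linarith

/-! ### Mixing -/

lemma minDegree_mul_card_le : (G.minDegree : ℝ) * Fintype.card V ≤ 2 * G.edgeFinset.card := by
  have h : Fintype.card V * G.minDegree ≤ ∑ v, G.degree v := by
    simpa using Finset.card_nsmul_le_sum Finset.univ (fun v => G.degree v) G.minDegree
      fun v _ => G.minDegree_le_degree v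
  rw [G.sum_degrees_eq_twice_card_edges] at h
  have : ((Fintype.card V * G.minDegree : ℕ) : ℝ) ≤ ((2 * G.edgeFinset.card : ℕ) : ℝ) := by
    exact_mod_cast h
  push_cast at this
  linarith

/-- After mixing, every vertex has probability at most `d(u) / m + 1 / n² ≤ 201 / n`. -/
lemma transMat_pow_mixing_le (P : Finset V) (k : ℕ) (hn : 0 < Fintype.card V)
    (hδ : 0 < G.minDegree) (hreg : AlmostRegular 100 G) (hmix : HasMixingTime G P k) (v u : V) :
    (transMat G ^ k) v u ≤ 201 / (Fintype.card V : ℝ) := by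
  have hδ' : (0 : ℝ) < G.minDegree := by exact_mod_cast hδ
  have hn' : (1 : ℝ) ≤ Fintype.card V := by exact_mod_cast hn
  have hm := minDegree_mul_card_le G
  have hm0 : (0 : ℝ) < 2 * G.edgeFinset.card := by nlinarith
  have hdu : (G.degree u : ℝ) ≤ 100 * G.minDegree :=
    le_trans (by exact_mod_cast G.degree_le_maxDegree u) hreg
  have h1 : (G.degree u : ℝ) / (2 * G.edgeFinset.card) ≤ 100 / Fintype.card V := by
    rw [div_le_div_iff₀ hm0 (by linarith)]
    nlinarith
  have h2 : ∀ e : ℕ, (0 : ℝ) ≤ 1 + (-1) ^ e ∧ (1 : ℝ) + (-1) ^ e ≤ 2 := by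
    intro e
    rcases neg_one_pow_eq_or ℝ e with h | h <;> rw [h] <;> norm_num
  have h3 := (abs_le.1 (hmix v u)).2
  have h4 : 1 / (Fintype.card V : ℝ) ^ 2 ≤ 1 / Fintype.card V :=
    one_div_le_one_div_of_le (by linarith) (by nlinarith)
  have h5 := mul_le_mul h1
    (h2 (k + (if v ∈ P then 1 else 0) + (if u ∈ P then 1 else 0))).2
    (h2 _).1 (by positivity)
  have h6 : 201 / (Fintype.card V : ℝ) = 100 / Fintype.card V * 2 + 1 / Fintype.card V := by ring
  linarith

end Walk

/-- Let `β = 10^{−28}` and let `G` be a connected `100`-almost-regular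
bipartite graph on `n` vertices (`n` sufficiently large) with mixing time `k` and
`δ(G) ≥ 10³k²/β`. Let `A` be a vertex set with `|A| ≤ β²n/(10^6 k)` and let `X` be the set
of vertices `v` with `α_v(A) ≥ 1 − β − 200k²/Δ(G)`. Then `|X| ≥ n − 100k|A|/β`, and for
every vertex `v` the probability `Q_k^v(X)` that the walk started at `v` is at a vertex of
`X` after `k` steps satisfies `Q_k^v(X) ≥ 1 − 10^5·k·|A|/(β·n) ≥ 1 − β/10`. -/
theorem stmt_17 :
    ∃ n₀ : ℕ, ∀ n : ℕ, n₀ ≤ n → ∀ (V : Type) [Fintype V], Fintype.card V = n →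
      ∀ (G : SimpleGraph V) (P : Finset V) (k : ℕ) (β : ℝ), β = 1 / 10 ^ 28 →
        G.Connected → IsBipartition G P → AlmostRegular 100 G → HasMixingTime G P k →
        10 ^ 3 * (k : ℝ) ^ 2 / β ≤ (G.minDegree : ℝ) →
        ∀ A : Finset V, (A.card : ℝ) ≤ β ^ 2 * (n : ℝ) / (10 ^ 6 * (k : ℝ)) →
          ((n : ℝ) - 100 * (k : ℝ) * (A.card : ℝ) / β ≤ ((goodSet G β k A).card : ℝ)) ∧
          (∀ v : V,
            1 - 10 ^ 5 * (k : ℝ) * (A.card : ℝ) / (β * (n : ℝ)) ≤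
              walkEventProb G v k (fun f => f (Fin.last k) ∈ goodSet G β k A)) ∧
          (1 - β / 10 ≤ 1 - 10 ^ 5 * (k : ℝ) * (A.card : ℝ) / (β * (n : ℝ))) := by
  -- Two vertices are enough for connectedness to force positive minimum degree.
  refine ⟨2, ?_⟩
  intro n hn V _ hV G P k β hβ hconn _ hreg hmix _ A hA
  have hβ0 : 0 < β := by rw [hβ]; positivity
  have : Nontrivial V := Fintype.one_lt_card_iff_nontrivial.1 (by omega)
  have hδ : 0 < G.minDegree := hconn.preconnected.minDegree_pos_of_nontrivial
  have hd : ∀ v, 0 < G.degree v := fun v => hδ.trans_le (G.minDegree_le_degree v)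
  have hΔ : 0 < G.maxDegree := hδ.trans_le G.minDegree_le_maxDegree
  have hn0 : (0 : ℝ) < n := by exact_mod_cast (by omega : 0 < n)
  have hcompl : ((goodSet G β k A)ᶜ.card : ℝ) ≤ 100 * k * A.card / β := by
    rw [le_div_iff₀ hβ0, ← nsmul_eq_mul]
    calc (goodSet G β k A)ᶜ.card • β ≤ ∑ v ∈ (goodSet G β k A)ᶜ, hitSum G k A v := by
          refine Finset.card_nsmul_le_sum _ _ _ fun v hv => ?_
          by_contra! hlt
          exact Finset.mem_compl.1 hv (mem_goodSet G hd hδ hΔ hreg β k A v hlt.le)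
      _ ≤ ∑ v, hitSum G k A v := Finset.sum_le_sum_of_subset_of_nonneg (Finset.subset_univ _)
          fun v _ _ => hitSum_nonneg G k A v
      _ ≤ _ := sum_hitSum_le G hd hδ hreg k A
  have hcard : ((goodSet G β k A).card : ℝ) + ((goodSet G β k A)ᶜ.card : ℝ) = n := by
    rw [← hV, ← Finset.card_add_card_compl (goodSet G β k A)]
    push_cast
    rfl
  refine ⟨by linarith, fun v => ?_, ?_⟩
  · have h0 : walkEventProb G v k (fun f => f (Fin.last k) ∈ goodSet G β k A) =
        ∑ u ∈ goodSet G β k A, (transMat G ^ k) v u := by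
      rw [walkEventProb_eq_walkExp]
      have h := walkExp_mem G hd k (Fin.last k) v (goodSet G β k A)
      rw [Fin.val_last] at h
      convert h
    rw [h0]
    have h1 := transMat_pow_row_sum G hd k v
    rw [← Finset.sum_add_sum_compl (goodSet G β k A)] at h1
    have h2 : ∑ u ∈ (goodSet G β k A)ᶜ, (transMat G ^ k) v u ≤
        (goodSet G β k A)ᶜ.card * (201 / (n : ℝ)) := by
      rw [← nsmul_eq_mul, ← hV]
      exact Finset.sum_le_card_nsmul _ _ _ fun u _ =>
        transMat_pow_mixing_le G P k (by omega) hδ hreg hmix v u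
    have h3 := mul_le_mul_of_nonneg_right hcompl (by positivity : 0 ≤ 201 / (n : ℝ))
    have h4 : 100 * (k : ℝ) * A.card / β * (201 / (n : ℝ)) ≤
        10 ^ 5 * (k : ℝ) * A.card / (β * n) := by
      rw [div_mul_div_comm]
      refine div_le_div_of_nonneg_right ?_ (by positivity)
      nlinarith [(by positivity : (0 : ℝ) ≤ (k : ℝ) * A.card)]
    linarith
  · have hkA : (k : ℝ) * A.card ≤ β ^ 2 * n / 10 ^ 6 := by
      rcases Nat.eq_zero_or_pos k with rfl | hk
      · simp only [Nat.cast_zero, zero_mul]; positivity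
      · have hk' : (0 : ℝ) < k := by exact_mod_cast hk
        rw [le_div_iff₀ (by positivity)] at hA ⊢
        linarith
    have : 10 ^ 5 * (k : ℝ) * A.card / (β * n) ≤ β / 10 := by
      rw [div_le_div_iff₀ (by positivity) (by norm_num)]
      linarith
    linarith
end
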